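/- arXiv:2209.02456 — 3 statements merged into one kernel-verified Lean document; each statement's English description precedes it below -/
import Mathlib

section
/- Let ℍ be a non-degenerate hypercomplex algebra of dimension n+1, let N ≥ 1, and let K ⊆ ℍ^N be a compact set. Let ψ : ℝ → ℝ be a continuous function with lim_{λ→−∞} ψ(λ) = 0 that is discriminatory for every compact subset of ℝ^{(n+1)N}. Then for every continuous function f : K → ℍ and every ε > 0 there exist M ∈ ℕ, coefficients α_1,…,α_M ∈ ℍ, biases θ_1,…,θ_M ∈ ℍ, and weight vectors y_1,…,y_M ∈ ℍ^N such that |f(x) − Σ_{i=1}^M α_i ψ_ℍ(Σ_{k=1}^N y_{ik} x_k + θ_i)| < ε for all x ∈ K, where all products α_i·(…) and y_{ik} x_k are taken in ℍ and |·| is the Euclidean norm on ℍ ≅ ℝ^{n+1}. -/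
/-!
The proof reduces the approximation of `ℍ`-valued functions to scalar ridge functions
`x ↦ ψ(wᵀx + t)`.

Scalar part (`ridge_span_dense`): the ridge functions span a dense subspace of `C(K, ℝ)`. If not,
Hahn–Banach gives a nonzero functional vanishing on them; it is a difference of two positive
functionals (`exists_positive_sub_positive`), hence by Riesz–Markov–Kakutani integration against
a signed measure, which is zero because `ψ` is discriminatory (`eq_zero_of_ridge`).

Hypercomplex part (`scalarTimes_mem`): the weights `y` are chosen so that the real part of
`∑ₖ yₖ xₖ` is `wᵀx`, which is possible since `B_0` is non-degenerate (`exists_weights`). Letting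
the biases of the imaginary coordinates tend to `-∞` makes those coordinates of the activation
tend to `0` uniformly on `K` (`tendsto_activation`), so the neuron with coefficient `a` tends to
`a · (ψ(wᵀx + t) · 1) = ψ(wᵀx + t) a`. Hence the closure of the space of networks contains every
`x ↦ g(x) a` with `g` scalar and continuous, and every continuous `f` is a sum of `n + 1` of
these.
-/

open Matrix MeasureTheory

/-- A function `ψ : ℝ → ℝ` is discriminatory for `K ⊆ ℝ^M` if for every finite
signed regular Borel measure `μ` on `K`, `∫_K ψ(yᵀx + θ) dμ(x) = 0` for all
`y ∈ ℝ^M` and `θ ∈ ℝ` implies `μ = 0`. The integral against the signed measure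
is expressed via its Jordan decomposition. -/
def Discriminatory {M : ℕ} (ψ : ℝ → ℝ) (K : Set (Fin M → ℝ)) : Prop :=
  ∀ μ : SignedMeasure K,
    μ.toJordanDecomposition.posPart.Regular →
    μ.toJordanDecomposition.negPart.Regular →
    (∀ (y : Fin M → ℝ) (θ : ℝ),
      (∫ x : K, ψ (y ⬝ᵥ (x : Fin M → ℝ) + θ) ∂μ.toJordanDecomposition.posPart) -
      (∫ x : K, ψ (y ⬝ᵥ (x : Fin M → ℝ) + θ) ∂μ.toJordanDecomposition.negPart) = 0) →
    μ = 0

/-- The product in the hypercomplex algebra of dimension `n+1` with structure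
constants `p`: `(xy)_0 = x_0 y_0 + ∑_{α,β} x_α y_β p_{αβ,0}` and
`(xy)_j = x_0 y_j + x_j y_0 + ∑_{α,β} x_α y_β p_{αβ,j}` for `j ≠ 0`. -/
def hyperMul {n : ℕ} (p : Fin n → Fin n → Fin (n + 1) → ℝ)
    (x y : Fin (n + 1) → ℝ) : Fin (n + 1) → ℝ := fun j =>
  x 0 * y j + (if j = 0 then 0 else x j * y 0) +
    ∑ α : Fin n, ∑ β : Fin n, x α.succ * y β.succ * p α β j

/-- The matrix of the coordinate bilinear form `B_j(x,y) = (xy)_j` in the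
canonical basis. -/
def hyperBilinMatrix {n : ℕ} (p : Fin n → Fin n → Fin (n + 1) → ℝ)
    (j : Fin (n + 1)) : Matrix (Fin (n + 1)) (Fin (n + 1)) ℝ :=
  Matrix.of fun α β =>
    if hα : α = 0 then (if β = j then 1 else 0)
    else if hβ : β = 0 then (if α = j then 1 else 0)
    else p (α.pred hα) (β.pred hβ) j

/-- The split activation function `ψ_ℍ` applies `ψ` coordinatewise. -/
def splitActivation {n : ℕ} (ψ : ℝ → ℝ) (x : Fin (n + 1) → ℝ) :
    Fin (n + 1) → ℝ := fun j => ψ (x j)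

/-- The Euclidean norm (absolute value) of a hypercomplex number. -/
noncomputable def hyperAbs {n : ℕ} (x : Fin (n + 1) → ℝ) : ℝ :=
  Real.sqrt (∑ j : Fin (n + 1), x j ^ 2)

/-! ### Signed Riesz representation and density of ridge functions -/

/-- A bounded linear functional on `C(X, ℝ)` is a difference of two positive ones. The pair
`(P, N)` is found by extending `(f, -f) ↦ Λ f` from the antidiagonal of `C(X, ℝ) × C(X, ℝ)`
below the sublinear map `(a, b) ↦ ‖Λ‖ (‖a⁺‖ + ‖b⁺‖)`; since this map vanishes on nonpositive
pairs, the extension `(a, b) ↦ P a + N b` is positive. -/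
lemma exists_positive_sub_positive {X : Type*} [TopologicalSpace X] [CompactSpace X]
    (Λ : C(X, ℝ) →L[ℝ] ℝ) :
    ∃ P N : C(X, ℝ) →ₗ[ℝ] ℝ, (∀ f, 0 ≤ f → 0 ≤ P f) ∧ (∀ f, 0 ≤ f → 0 ≤ N f) ∧
      ∀ f, Λ f = P f - N f := by
  let D : Submodule ℝ (C(X, ℝ) × C(X, ℝ)) :=
    LinearMap.ker (LinearMap.fst ℝ C(X, ℝ) C(X, ℝ) + LinearMap.snd ℝ C(X, ℝ) C(X, ℝ))
  let F₀ : (C(X, ℝ) × C(X, ℝ)) →ₗ.[ℝ] ℝ :=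
    ⟨D, (Λ : C(X, ℝ) →ₗ[ℝ] ℝ).comp ((LinearMap.fst ℝ C(X, ℝ) C(X, ℝ)).comp D.subtype)⟩
  have hadd : ∀ a b : C(X, ℝ), ‖(a + b) ⊔ 0‖ ≤ ‖a ⊔ 0‖ + ‖b ⊔ 0‖ := by
    intro a b
    refine (ContinuousMap.norm_le _ (by positivity)).2 fun x => ?_
    have ha := ContinuousMap.norm_coe_le_norm (a ⊔ 0) x
    have hb := ContinuousMap.norm_coe_le_norm (b ⊔ 0) x
    simp only [ContinuousMap.sup_apply, ContinuousMap.add_apply, ContinuousMap.zero_apply,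
      Real.norm_eq_abs] at *
    rw [abs_of_nonneg (le_max_right _ _)] at *
    have := le_max_left (a x) 0
    have := le_max_left (b x) 0
    have := le_max_right (a x) 0
    have := le_max_right (b x) 0
    exact max_le (by linarith) (by linarith)
  have hsmul : ∀ (c : ℝ), 0 < c → ∀ a : C(X, ℝ), ‖(c • a) ⊔ 0‖ = c * ‖a ⊔ 0‖ := by
    intro c hc a
    have : (c • a) ⊔ 0 = c • (a ⊔ 0) := by
      ext x
      simp [mul_max_of_nonneg _ _ hc.le]
    rw [this, norm_smul, Real.norm_of_nonneg hc.le]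
  have hnorm : ∀ a : C(X, ℝ), ‖a‖ ≤ ‖a ⊔ 0‖ + ‖(-a) ⊔ 0‖ := by
    intro a
    refine (ContinuousMap.norm_le _ (by positivity)).2 fun x => ?_
    have ha := ContinuousMap.norm_coe_le_norm (a ⊔ 0) x
    have hb := ContinuousMap.norm_coe_le_norm ((-a) ⊔ 0) x
    simp only [ContinuousMap.sup_apply, ContinuousMap.neg_apply, ContinuousMap.zero_apply,
      Real.norm_eq_abs] at *
    rw [abs_of_nonneg (le_max_right _ _)] at ha hb
    have := le_max_left (a x) 0
    have := le_max_left (-a x) 0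
    have := le_max_right (a x) 0
    have := le_max_right (-a x) 0
    exact abs_le.2 ⟨by linarith, by linarith⟩
  obtain ⟨F, hF, hFle⟩ := exists_extension_of_le_sublinear F₀
    (fun q => ‖Λ‖ * (‖q.1 ⊔ 0‖ + ‖q.2 ⊔ 0‖))
    (fun c hc q => by simp only [Prod.smul_fst, Prod.smul_snd, hsmul c hc]; ring)
    (fun q r => by
      rw [← mul_add]
      refine mul_le_mul_of_nonneg_left ?_ Λ.opNorm_nonneg
      have := hadd q.1 r.1
      have := hadd q.2 r.2
      simp only [Prod.fst_add, Prod.snd_add]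
      linarith)
    (fun q => by
      obtain ⟨⟨a, b⟩, hq⟩ := q
      have hb : b = -a := by
        have : a + b = 0 := hq
        exact (neg_eq_of_add_eq_zero_right this).symm
      subst hb
      change Λ a ≤ ‖Λ‖ * (‖a ⊔ 0‖ + ‖(-a) ⊔ 0‖)
      calc Λ a ≤ ‖Λ a‖ := le_abs_self _
        _ ≤ ‖Λ‖ * ‖a‖ := Λ.le_opNorm a
        _ ≤ _ := mul_le_mul_of_nonneg_left (hnorm a) Λ.opNorm_nonneg)
  refine ⟨F.comp (LinearMap.inl ℝ _ _), F.comp (LinearMap.inr ℝ _ _), ?_, ?_, ?_⟩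
  · intro f hf
    have := hFle (-(f, 0))
    have h0 : (-f) ⊔ 0 = 0 := sup_eq_right.2 (neg_nonpos.2 hf)
    rw [map_neg] at this
    simp [h0] at this
    simpa using this
  · intro f hf
    have := hFle (-(0, f))
    have h0 : (-f) ⊔ 0 = 0 := sup_eq_right.2 (neg_nonpos.2 hf)
    rw [map_neg] at this
    simp [h0] at this
    simpa using this
  · intro f
    have h := hF ⟨(f, -f), by simp [F₀, D]⟩
    change F (f, -f) = Λ f at h
    rw [← h]
    simp only [LinearMap.comp_apply, LinearMap.inl_apply, LinearMap.inr_apply, ← map_sub]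
    simp

/-- Riesz representation of a positive functional on `C(X, ℝ)`, `X` compact. -/
lemma exists_measure_of_positive {X : Type*} [TopologicalSpace X] [CompactSpace X] [T2Space X]
    [MeasurableSpace X] [BorelSpace X]
    (P : C(X, ℝ) →ₗ[ℝ] ℝ) (hP : ∀ f, 0 ≤ f → 0 ≤ P f) :
    ∃ μ : Measure X, IsFiniteMeasure μ ∧ ∀ f : C(X, ℝ), ∫ x, f x ∂μ = P f := by
  let Q : CompactlySupportedContinuousMap X ℝ →ₗ[ℝ] ℝ :=
    { toFun := fun f => P f.toContinuousMap
      map_add' := fun f g => P.map_add f.toContinuousMap g.toContinuousMap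
      map_smul' := fun c f => P.map_smul c f.toContinuousMap }
  let Q' : CompactlySupportedContinuousMap X ℝ →ₚ[ℝ] ℝ :=
    PositiveLinearMap.mk₀ Q fun f hf => hP f.toContinuousMap hf
  refine ⟨RealRMK.rieszMeasure Q', ⟨isCompact_univ.measure_lt_top⟩, fun f => ?_⟩
  exact RealRMK.integral_rieszMeasure Q' (CompactlySupportedContinuousMap.continuousMapEquiv f)

/-- The ridge function `x ↦ ψ(yᵀx + θ)` as a continuous function on `K`. -/
def ridge {m : ℕ} (ψ : ℝ → ℝ) (hψ : Continuous ψ) (K : Set (Fin m → ℝ)) (y : Fin m → ℝ)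
    (θ : ℝ) : C(K, ℝ) :=
  ⟨fun x => ψ (y ⬝ᵥ (x : Fin m → ℝ) + θ), by
    refine hψ.comp (Continuous.add ?_ continuous_const)
    exact continuous_finsetSum _ fun i _ =>
      continuous_const.mul ((continuous_apply i).comp continuous_subtype_val)⟩

/-- A functional on `C(K, ℝ)` vanishing on all ridge functions is zero: it is represented by a
signed measure, to which `Discriminatory` applies. -/
lemma eq_zero_of_ridge {m : ℕ} {ψ : ℝ → ℝ} (hψ : Continuous ψ) {K : Set (Fin m → ℝ)}
    (hK : IsCompact K) (hd : Discriminatory ψ K) (Λ : C(K, ℝ) →L[ℝ] ℝ)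
    (hΛ : ∀ y θ, Λ (ridge ψ hψ K y θ) = 0) : Λ = 0 := by
  have : CompactSpace K := isCompact_iff_compactSpace.1 hK
  obtain ⟨P, N, hP, hN, hPN⟩ := exists_positive_sub_positive Λ
  obtain ⟨μ, hμ, hμP⟩ := exists_measure_of_positive P hP
  obtain ⟨ν, hν, hνN⟩ := exists_measure_of_positive N hN
  let s : SignedMeasure K := μ.toSignedMeasure - ν.toSignedMeasure
  have hint : ∀ (ρ : Measure K) [IsFiniteMeasure ρ] (f : C(K, ℝ)), Integrable f ρ :=
    fun ρ _ f => f.continuous.integrable_of_hasCompactSupport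
      (HasCompactSupport.of_compactSpace f)
  have hs : s.toJordanDecomposition.posPart + ν = s.toJordanDecomposition.negPart + μ := by
    rw [← Measure.toSignedMeasure_eq_toSignedMeasure_iff, Measure.toSignedMeasure_add,
      Measure.toSignedMeasure_add]
    have h : s.toJordanDecomposition.posPart.toSignedMeasure -
        s.toJordanDecomposition.negPart.toSignedMeasure = s :=
      s.toSignedMeasure_toJordanDecomposition
    rw [sub_eq_iff_eq_add] at h
    rw [h]
    simp only [s]
    abel
  have h0 : s = 0 := by
    refine hd s inferInstance inferInstance fun y θ => ?_
    have h := hΛ y θ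
    rw [hPN, ← hμP, ← hνN] at h
    have h2 := congrArg (fun ρ : Measure K => ∫ x, ridge ψ hψ K y θ x ∂ρ) hs
    rw [integral_add_measure (hint _ _) (hint _ _),
      integral_add_measure (hint _ _) (hint _ _)] at h2
    change ∫ x, ridge ψ hψ K y θ x ∂s.toJordanDecomposition.posPart -
      ∫ x, ridge ψ hψ K y θ x ∂s.toJordanDecomposition.negPart = 0
    linarith
  have hμν : μ = ν := Measure.toSignedMeasure_eq_toSignedMeasure_iff.1 (sub_eq_zero.1 h0)
  ext f
  rw [hPN, ← hμP, ← hνN, hμν]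
  simp

/-- Density of the span of ridge functions: Hahn–Banach would otherwise give a nonzero functional
vanishing on all of them. -/
lemma ridge_span_dense {m : ℕ} {ψ : ℝ → ℝ} (hψ : Continuous ψ) {K : Set (Fin m → ℝ)}
    (hK : IsCompact K) [CompactSpace K] (hd : Discriminatory ψ K) :
    (Submodule.span ℝ {g | ∃ y θ, g = ridge ψ hψ K y θ}).topologicalClosure = ⊤ := by
  set V := (Submodule.span ℝ {g | ∃ y θ, g = ridge ψ hψ K y θ}).topologicalClosure with hV
  by_contra hne
  obtain ⟨g, hg⟩ : ∃ g, g ∉ V := by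
    by_contra! h
    exact hne (Submodule.eq_top_iff'.2 h)
  obtain ⟨Λ, u, hu, hgu⟩ := geometric_hahn_banach_closed_point V.convex
    (Submodule.isClosed_topologicalClosure _) hg
  -- a functional bounded above on a subspace vanishes on it
  have hzero : ∀ v ∈ V, Λ v = 0 := by
    intro v hv
    by_contra hv0
    have := hu _ (V.smul_mem (u / Λ v) hv)
    rw [map_smul, smul_eq_mul, div_mul_cancel₀ _ hv0] at this
    exact lt_irrefl _ this
  have hΛ : Λ = 0 := eq_zero_of_ridge hψ hK hd Λ fun y θ =>
    hzero _ (Submodule.le_topologicalClosure _ (Submodule.subset_span ⟨y, θ, rfl⟩))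
  have h0 := hu 0 V.zero_mem
  simp only [hΛ, _root_.zero_apply] at h0 hgu
  linarith

/-! ### Hypercomplex multiplication and networks -/

lemma hyperMul_apply {n : ℕ} (p : Fin n → Fin n → Fin (n + 1) → ℝ) (x y : Fin (n + 1) → ℝ)
    (j : Fin (n + 1)) : hyperMul p x y j = x ⬝ᵥ (hyperBilinMatrix p j *ᵥ y) := by
  simp only [hyperMul, hyperBilinMatrix, dotProduct, mulVec, Matrix.of_apply]
  rw [Fin.sum_univ_succ]
  simp only [Fin.sum_univ_succ (n := n), Fin.succ_ne_zero, dite_true, dite_false, Fin.pred_succ,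
    mul_add, Finset.sum_add_distrib, Finset.mul_sum]
  have h1 : x 0 * y j = x 0 * ((if (0 : Fin (n + 1)) = j then 1 else 0) * y 0) +
      ∑ i : Fin n, x 0 * ((if i.succ = j then 1 else 0) * y i.succ) := by
    rw [← Fin.sum_univ_succ (fun i => x 0 * ((if i = j then 1 else 0) * y i))]
    simp
  have h2 : (if j = 0 then 0 else x j * y 0) =
      ∑ i : Fin n, x i.succ * ((if i.succ = j then 1 else 0) * y 0) := by
    refine Fin.cases ?_ (fun k => ?_) j
    · simp [Fin.succ_ne_zero]
    · simp [Fin.succ_ne_zero]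
  rw [h1, h2, add_assoc (_ + _)]
  congr 2
  exact Finset.sum_congr rfl fun a _ => Finset.sum_congr rfl fun b _ => by ring

/-- Multiplication on the left by `a`, as a linear map. -/
def hyperMulLeft {n : ℕ} (p : Fin n → Fin n → Fin (n + 1) → ℝ) (a : Fin (n + 1) → ℝ) :
    (Fin (n + 1) → ℝ) →ₗ[ℝ] (Fin (n + 1) → ℝ) where
  toFun := hyperMul p a
  map_add' x y := by
    ext j
    simp [hyperMul_apply, mulVec_add, dotProduct_add]
  map_smul' c x := by
    ext j
    simp [hyperMul_apply, mulVec_smul, dotProduct_smul]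

lemma continuous_hyperMul {n : ℕ} (p : Fin n → Fin n → Fin (n + 1) → ℝ)
    (a : Fin (n + 1) → ℝ) : Continuous (hyperMul p a) :=
  (hyperMulLeft p a).continuous_of_finiteDimensional

lemma hyperMul_smul_left {n : ℕ} (p : Fin n → Fin n → Fin (n + 1) → ℝ) (c : ℝ)
    (a x : Fin (n + 1) → ℝ) : hyperMul p (c • a) x = c • hyperMul p a x := by
  ext j
  simp [hyperMul_apply]

/-- Multiplication on the right by a real number `c = c · 1`. -/
lemma hyperMul_single_zero {n : ℕ} (p : Fin n → Fin n → Fin (n + 1) → ℝ)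
    (a : Fin (n + 1) → ℝ) (c : ℝ) : hyperMul p a (Pi.single 0 c) = c • a := by
  ext j
  by_cases hj : j = 0
  · subst hj
    simp [hyperMul, Fin.succ_ne_zero, mul_comm]
  · simp [hyperMul, Fin.succ_ne_zero, hj, mul_comm]

section Networks

variable {n N : ℕ} (p : Fin n → Fin n → Fin (n + 1) → ℝ) (ψ : ℝ → ℝ) (hψ : Continuous ψ)
  (K : Set (Fin N → Fin (n + 1) → ℝ))

lemma continuous_preactivation (y : Fin N → Fin (n + 1) → ℝ) :
    Continuous fun x : Fin N → Fin (n + 1) → ℝ => ∑ k, hyperMul p (y k) (x k) :=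
  continuous_finsetSum _ fun k _ => (continuous_hyperMul p (y k)).comp (continuous_apply k)

/-- The activation vector `ψ_ℍ(∑ₖ yₖ xₖ + θ)` as a continuous function on `K`. -/
def activation (θ : Fin (n + 1) → ℝ) (y : Fin N → Fin (n + 1) → ℝ) :
    C(K, Fin (n + 1) → ℝ) :=
  ⟨fun x => splitActivation ψ ((∑ k, hyperMul p (y k) (x.1 k)) + θ), by
    refine continuous_pi fun j => hψ.comp ((continuous_apply j).comp ?_)
    exact ((continuous_preactivation p y).comp continuous_subtype_val).add continuous_const⟩

/-- Left multiplication by `a` as a continuous self-map of `ℍ`. -/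
def hyperMulMap (a : Fin (n + 1) → ℝ) : C(Fin (n + 1) → ℝ, Fin (n + 1) → ℝ) :=
  ⟨hyperMul p a, continuous_hyperMul p a⟩

/-- The space of functions on `K` computed by networks, as a span of single neurons. -/
def networks : Submodule ℝ C(K, Fin (n + 1) → ℝ) :=
  Submodule.span ℝ {F | ∃ a θ y, F = (hyperMulMap p a).comp (activation p ψ hψ K θ y)}

lemma exists_of_mem_networks {F : C(K, Fin (n + 1) → ℝ)} (hF : F ∈ networks p ψ hψ K) :
    ∃ (M : ℕ) (α θ : Fin M → Fin (n + 1) → ℝ) (y : Fin M → Fin N → Fin (n + 1) → ℝ),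
      ∀ x : K, F x = ∑ i : Fin M, hyperMul p (α i)
        (splitActivation ψ ((∑ k : Fin N, hyperMul p (y i k) (x.1 k)) + θ i)) := by
  induction hF using Submodule.span_induction with
  | mem F hF =>
    obtain ⟨a, θ, y, rfl⟩ := hF
    exact ⟨1, fun _ => a, fun _ => θ, fun _ => y, fun x => by
      simp [hyperMulMap, activation]⟩
  | zero => exact ⟨0, Fin.elim0, Fin.elim0, Fin.elim0, fun x => by simp⟩
  | add F G _ _ hF hG =>
    obtain ⟨M₁, a₁, θ₁, y₁, h₁⟩ := hF
    obtain ⟨M₂, a₂, θ₂, y₂, h₂⟩ := hG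
    refine ⟨M₁ + M₂, Fin.append a₁ a₂, Fin.append θ₁ θ₂, Fin.append y₁ y₂, fun x => ?_⟩
    rw [ContinuousMap.add_apply, h₁, h₂, Fin.sum_univ_add]
    simp
  | smul c F _ hF =>
    obtain ⟨M, a, θ, y, h⟩ := hF
    refine ⟨M, fun i => c • a i, θ, y, fun x => ?_⟩
    rw [ContinuousMap.smul_apply, h, Finset.smul_sum]
    simp only [hyperMul_smul_left]

/-- Sending the biases of all coordinates except the `0`-th to `-∞` kills those coordinates of
the activation vector, uniformly on the compact set `K`. -/
lemma tendsto_activation [CompactSpace K] (hlim : Filter.Tendsto ψ Filter.atBot (nhds 0))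
    (y : Fin N → Fin (n + 1) → ℝ) (t : ℝ) (G : C(K, Fin (n + 1) → ℝ))
    (hG : ∀ x, G x = Pi.single 0 (ψ ((∑ k, hyperMul p (y k) (x.1 k)) 0 + t))) :
    Filter.Tendsto (fun s : ℝ => activation p ψ hψ K (Function.update (fun _ => s) 0 t) y)
      Filter.atBot (nhds G) := by
  let L : C(K, Fin (n + 1) → ℝ) :=
    ⟨fun x => ∑ k, hyperMul p (y k) (x.1 k),
      (continuous_preactivation p y).comp continuous_subtype_val⟩
  rw [Metric.tendsto_nhds]
  intro ε hε
  obtain ⟨R, hR⟩ := Filter.eventually_atBot.1 (Metric.tendsto_nhds.1 hlim (ε / 2) (half_pos hε))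
  filter_upwards [Filter.eventually_le_atBot (R - ‖L‖)] with s hs
  refine lt_of_le_of_lt ?_ (half_lt_self hε)
  refine (ContinuousMap.dist_le (half_pos hε).le).2 fun x => ?_
  refine (dist_pi_le_iff (half_pos hε).le).2 fun j => ?_
  rw [hG]
  by_cases hj : j = 0
  · subst hj
    simp [activation, splitActivation, (half_pos hε).le]
  · have hL : L x j ≤ ‖L‖ :=
      (le_abs_self _).trans ((norm_le_pi_norm (L x) j).trans (L.norm_coe_le_norm x))
    have := hR (L x j + s) (by linarith)
    rw [Pi.single_eq_of_ne hj]
    simpa [activation, splitActivation, Function.update_of_ne hj, L] using this.le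

/-- By non-degeneracy of `B_0`, every real linear functional on `ℍ^N` is the `0`-th coordinate
of `x ↦ ∑ₖ yₖ xₖ` for suitable weights. -/
lemma exists_weights (hdet : IsUnit (hyperBilinMatrix p 0).det) (w : Fin N → Fin (n + 1) → ℝ) :
    ∃ y : Fin N → Fin (n + 1) → ℝ, ∀ x : Fin N → Fin (n + 1) → ℝ,
      (∑ k, hyperMul p (y k) (x k)) 0 = ∑ k, w k ⬝ᵥ x k := by
  refine ⟨fun k => w k ᵥ* (hyperBilinMatrix p 0)⁻¹, fun x => ?_⟩
  rw [Finset.sum_apply]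
  refine Finset.sum_congr rfl fun k _ => ?_
  rw [hyperMul_apply, dotProduct_mulVec, vecMul_vecMul, Matrix.nonsing_inv_mul _ hdet, vecMul_one]

end Networks

/-- The coordinate identification `ℍ^N → ℝ^{(n+1)N}`. -/
def flatten {n N : ℕ} (x : Fin N → Fin (n + 1) → ℝ) : Fin ((n + 1) * N) → ℝ :=
  fun i => x (finProdFinEquiv.symm i).2 (finProdFinEquiv.symm i).1

/-- The inverse of `flatten`. -/
def unflatten {n N : ℕ} (z : Fin ((n + 1) * N) → ℝ) : Fin N → Fin (n + 1) → ℝ :=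
  fun k a => z (finProdFinEquiv (a, k))

lemma unflatten_flatten {n N : ℕ} (x : Fin N → Fin (n + 1) → ℝ) : unflatten (flatten x) = x := by
  ext k a
  simp [flatten, unflatten]

lemma continuous_flatten {n N : ℕ} :
    Continuous (flatten : (Fin N → Fin (n + 1) → ℝ) → _) := by
  unfold flatten
  fun_prop

lemma continuous_unflatten {n N : ℕ} :
    Continuous (unflatten : _ → (Fin N → Fin (n + 1) → ℝ)) := by
  unfold unflatten
  fun_prop

lemma dotProduct_flatten {n N : ℕ} (w : Fin ((n + 1) * N) → ℝ) (x : Fin N → Fin (n + 1) → ℝ) :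
    w ⬝ᵥ flatten x = ∑ k, unflatten w k ⬝ᵥ x k := by
  simp only [dotProduct, flatten, unflatten]
  rw [← finProdFinEquiv.sum_comp, Fintype.sum_prod_type_right]
  simp

/-- The map `g ↦ (x ↦ g(x) • a)` from scalar functions on the flattened copy of `K` to `ℍ`-valued
functions on `K`. -/
def scalarTimes {n N : ℕ} (K : Set (Fin N → Fin (n + 1) → ℝ)) (a : Fin (n + 1) → ℝ) :
    C(Set.image flatten K, ℝ) →ₗ[ℝ] C(K, Fin (n + 1) → ℝ) where
  toFun g := (⟨fun c : ℝ => c • a, by fun_prop⟩ : C(ℝ, Fin (n + 1) → ℝ)).comp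
    (g.comp ⟨fun x => ⟨flatten x.1, Set.mem_image_of_mem _ x.2⟩,
      (continuous_flatten.comp continuous_subtype_val).subtype_mk _⟩)
  map_add' g h := by
    ext x
    simp [add_mul]
  map_smul' c g := by
    ext x
    simp [mul_assoc]

lemma continuous_scalarTimes {n N : ℕ} (K : Set (Fin N → Fin (n + 1) → ℝ))
    (a : Fin (n + 1) → ℝ) : Continuous (scalarTimes K a) :=
  (ContinuousMap.continuous_postcomp _).comp (ContinuousMap.continuous_precomp _)

lemma scalarTimes_mem {n N : ℕ} (p : Fin n → Fin n → Fin (n + 1) → ℝ)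
    (hdet : IsUnit (hyperBilinMatrix p 0).det) {ψ : ℝ → ℝ} (hψ : Continuous ψ)
    (hlim : Filter.Tendsto ψ Filter.atBot (nhds 0))
    {K : Set (Fin N → Fin (n + 1) → ℝ)} (hK : IsCompact K) [CompactSpace K]
    (hd : Discriminatory ψ (Set.image flatten K)) (a : Fin (n + 1) → ℝ) (g : C(Set.image flatten K, ℝ)) :
    scalarTimes K a g ∈ (networks p ψ hψ K).topologicalClosure := by
  have hK' : IsCompact (Set.image flatten K) := hK.image continuous_flatten
  have : CompactSpace (Set.image flatten K) := isCompact_iff_compactSpace.1 hK'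
  suffices h : (Submodule.span ℝ
      {g | ∃ y θ, g = ridge ψ hψ (Set.image flatten K) y θ}).topologicalClosure ≤
      (networks p ψ hψ K).topologicalClosure.comap (scalarTimes K a) by
    rw [ridge_span_dense hψ hK' hd] at h
    exact h trivial
  refine Submodule.topologicalClosure_minimal _ (Submodule.span_le.2 ?_)
    ((Submodule.isClosed_topologicalClosure _).preimage (continuous_scalarTimes K a))
  rintro _ ⟨w, t, rfl⟩
  obtain ⟨y, hy⟩ := exists_weights p hdet (unflatten w)
  let G : C(K, Fin (n + 1) → ℝ) :=
    ⟨fun x => Pi.single 0 (ψ ((∑ k, hyperMul p (y k) (x.1 k)) 0 + t)), by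
      refine (continuous_single 0).comp (hψ.comp ?_)
      exact ((continuous_apply 0).comp ((continuous_preactivation p y).comp
        continuous_subtype_val)).add continuous_const⟩
  have hT : scalarTimes K a (ridge ψ hψ (Set.image flatten K) w t) = (hyperMulMap p a).comp G := by
    refine ContinuousMap.ext fun x => ?_
    change ψ (w ⬝ᵥ flatten x.1 + t) • a = hyperMul p a (Pi.single 0 _)
    rw [hyperMul_single_zero, hy, dotProduct_flatten]
  have hlimG := (ContinuousMap.continuous_postcomp (hyperMulMap p a)).continuousAt.tendsto.comp
    (tendsto_activation p ψ hψ K hlim y t G fun x => rfl)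
  change scalarTimes K a (ridge ψ hψ (Set.image flatten K) w t) ∈
    (networks p ψ hψ K).topologicalClosure
  rw [hT]
  exact mem_closure_of_tendsto hlimG
    (Filter.Eventually.of_forall fun s => Submodule.subset_span ⟨a, _, y, rfl⟩)

lemma hyperAbs_le {n : ℕ} (v : Fin (n + 1) → ℝ) : hyperAbs v ≤ (n + 1) * ‖v‖ := by
  refine Real.sqrt_le_iff.2 ⟨by positivity, ?_⟩
  calc ∑ j, v j ^ 2 ≤ ∑ _j : Fin (n + 1), ‖v‖ ^ 2 := by
        refine Finset.sum_le_sum fun j _ => ?_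
        rw [← sq_abs]
        exact pow_le_pow_left₀ (abs_nonneg _) (norm_le_pi_norm v j) 2
    _ = (n + 1) * ‖v‖ ^ 2 := by simp
    _ ≤ ((n + 1) * ‖v‖) ^ 2 := by
        rw [mul_pow]
        refine mul_le_mul_of_nonneg_right ?_ (sq_nonneg _)
        nlinarith [(Nat.cast_nonneg n : (0 : ℝ) ≤ n)]

/-- **Universal approximation theorem for hypercomplex-valued
neural networks.** Let `ℍ` be a non-degenerate hypercomplex algebra of
dimension `n+1`, `K ⊆ ℍ^N` compact, and `ψ : ℝ → ℝ` continuous with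
`ψ(λ) → 0` as `λ → −∞` and discriminatory for every compact subset of
`ℝ^{(n+1)N}`. Then single-hidden-layer `ℍ`-valued MLPs with split activation
`ψ_ℍ` approximate every continuous `f : K → ℍ` uniformly on `K` to within any
`ε > 0`. -/
theorem universal_approximation_hypercomplex {n N : ℕ} (hN : 1 ≤ N)
    (p : Fin n → Fin n → Fin (n + 1) → ℝ)
    (hnondeg : ∀ j : Fin (n + 1), IsUnit (hyperBilinMatrix p j).det)
    (K : Set (Fin N → Fin (n + 1) → ℝ)) (hK : IsCompact K)
    (ψ : ℝ → ℝ) (hψcont : Continuous ψ)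
    (hψlim : Filter.Tendsto ψ Filter.atBot (nhds 0))
    (hψdisc : ∀ K' : Set (Fin ((n + 1) * N) → ℝ), IsCompact K' →
      Discriminatory ψ K')
    (f : (Fin N → Fin (n + 1) → ℝ) → (Fin (n + 1) → ℝ)) (hf : ContinuousOn f K)
    (ε : ℝ) (hε : 0 < ε) :
    ∃ (M : ℕ) (α θ : Fin M → Fin (n + 1) → ℝ)
      (y : Fin M → Fin N → Fin (n + 1) → ℝ),
      ∀ x ∈ K,
        hyperAbs (f x - ∑ i : Fin M,
          hyperMul p (α i)
            (splitActivation ψ ((∑ k : Fin N, hyperMul p (y i k) (x k)) + θ i)))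
          < ε := by
  have : CompactSpace K := isCompact_iff_compactSpace.1 hK
  let F : C(K, Fin (n + 1) → ℝ) := ⟨fun x => f x.1, continuousOn_iff_continuous_domRestrict.1 hf⟩
  have hmaps : ∀ z : Set.image flatten K, unflatten z.1 ∈ K := by
    rintro ⟨_, x, hx, rfl⟩
    rwa [unflatten_flatten]
  let g : Fin (n + 1) → C(Set.image flatten K, ℝ) := fun j =>
    ⟨fun z => F ⟨unflatten z.1, hmaps z⟩ j, (continuous_apply j).comp (F.continuous.comp
      ((continuous_unflatten.comp continuous_subtype_val).subtype_mk _))⟩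
  have hF : F = ∑ j, scalarTimes K (Pi.single j 1) (g j) := by
    ext x j
    simp [scalarTimes, g, unflatten_flatten, Pi.single_apply]
  have hmem : F ∈ (networks p ψ hψcont K).topologicalClosure := by
    rw [hF]
    exact Submodule.sum_mem _ fun j _ => scalarTimes_mem p (hnondeg 0) hψcont hψlim hK
      (hψdisc _ (hK.image continuous_flatten)) _ _
  obtain ⟨G, hG, hFG⟩ := Metric.mem_closure_iff.1 hmem (ε / (n + 1)) (by positivity)
  obtain ⟨M, α, θ, y, h⟩ := exists_of_mem_networks p ψ hψcont K hG
  refine ⟨M, α, θ, y, fun x hx => ?_⟩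
  rw [← h ⟨x, hx⟩]
  refine (hyperAbs_le _).trans_lt ?_
  rw [← dist_eq_norm, ← lt_div_iff₀' (by positivity)]
  exact (ContinuousMap.dist_apply_le_dist ⟨x, hx⟩).trans_lt hFG
end

section
/- Let K ⊆ ℚ^N be a compact set, where ℚ = Quaternion ℝ denotes the real quaternions. For every continuous function f : K → ℚ and every ε > 0 there exist M ∈ ℕ, α_1,…,α_M ∈ ℚ, θ_1,…,θ_M ∈ ℚ, and y_1,…,y_M ∈ ℚ^N such that |f(x) − Σ_{i=1}^M α_i σ_ℚ(Σ_{k=1}^N y_{ik} x_k + θ_i)| < ε for all x ∈ K, where σ_ℚ is the split sigmoid activation, all products are quaternion products, and |·| is the quaternion norm; that is, single-hidden-layer quaternion-valued MLPs with split sigmoid activation are universal approximators of continuous quaternion-valued functions on compact subsets of ℚ^N. -/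
/-- The logistic sigmoid. -/
noncomputable def logisticSigmoid (t : ℝ) : ℝ := 1 / (1 + Real.exp (-t))

/-- The split sigmoid activation `σ_ℚ` on the real quaternions, applying the
logistic sigmoid to each of the four coordinates. -/
noncomputable def splitSigmoidQ (x : Quaternion ℝ) : Quaternion ℝ :=
  ⟨logisticSigmoid x.re, logisticSigmoid x.imI,
    logisticSigmoid x.imJ, logisticSigmoid x.imK⟩

/-!
The logistic sigmoid decays exponentially at `-∞`: `exp n * σ (t - n) → exp t` as `n → ∞`,
uniformly for bounded `t`, whereas `exp n * σ (t - 2 n) → 0`. A single neuron with weights `y`,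
bias `-n - 2 n i - 2 n j - 2 n k` and coefficient `exp n` therefore converges, uniformly on the
compact set `K`, to the real function `x ↦ exp (Re (∑ k, y k * x k))` (`approximable_exp`).

These exponentials are closed under multiplication and separate points, so by Stone–Weierstrass
their real span is dense in `C(K, ℝ)`. Hence every real continuous function on `K` is a uniform
limit of networks (`approximable_real`). Networks are closed under addition and under left
multiplication by quaternions, so `f = i * f₁ + j * f₂ + k * f₃ + f₀` is such a limit as well.
-/

/-- `g` is a uniform limit on `K` of single-hidden-layer networks with split sigmoid
activation. -/
def Approximable {N : ℕ} (K : Set (Fin N → Quaternion ℝ)) (g : K → Quaternion ℝ) : Prop :=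
  ∀ ε : ℝ, 0 < ε → ∃ (M : ℕ) (α θ : Fin M → Quaternion ℝ) (y : Fin M → Fin N → Quaternion ℝ),
    ∀ x : K, ‖g x - ∑ i : Fin M,
      α i * splitSigmoidQ ((∑ k : Fin N, y i k * x.1 k) + θ i)‖ < ε

section

variable {N : ℕ} {K : Set (Fin N → Quaternion ℝ)}

lemma Approximable.zero : Approximable K (fun _ => 0) := by
  intro ε hε
  exact ⟨0, Fin.elim0, Fin.elim0, Fin.elim0, fun x => by simpa using hε⟩

lemma Approximable.add {g h : K → Quaternion ℝ} (hg : Approximable K g)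
    (hh : Approximable K h) : Approximable K (fun x => g x + h x) := by
  intro ε hε
  obtain ⟨M, α, θ, y, H⟩ := hg (ε / 2) (half_pos hε)
  obtain ⟨M', α', θ', y', H'⟩ := hh (ε / 2) (half_pos hε)
  refine ⟨M + M', Fin.append α α', Fin.append θ θ', Fin.append y y', fun x => ?_⟩
  simp only [Fin.sum_univ_add, Fin.append_left, Fin.append_right]
  rw [add_sub_add_comm]
  linarith [H x, H' x, norm_add_le
    (g x - ∑ i, α i * splitSigmoidQ ((∑ k, y i k * x.1 k) + θ i))
    (h x - ∑ i, α' i * splitSigmoidQ ((∑ k, y' i k * x.1 k) + θ' i))]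

lemma Approximable.const_mul {g : K → Quaternion ℝ} (hg : Approximable K g)
    (c : Quaternion ℝ) : Approximable K (fun x => c * g x) := by
  intro ε hε
  obtain ⟨M, α, θ, y, H⟩ := hg (ε / (‖c‖ + 1)) (by positivity)
  refine ⟨M, fun i => c * α i, θ, y, fun x => ?_⟩
  simp only [mul_assoc]
  rw [← Finset.mul_sum, ← mul_sub, norm_mul]
  have h1 := H x
  rw [lt_div_iff₀ (by positivity)] at h1
  nlinarith [norm_nonneg (g x - ∑ i, α i * splitSigmoidQ ((∑ k, y i k * x.1 k) + θ i))]

lemma Approximable.of_near {g : K → Quaternion ℝ}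
    (hg : ∀ ε : ℝ, 0 < ε → ∃ h : K → Quaternion ℝ, Approximable K h ∧ ∀ x, ‖g x - h x‖ < ε) :
    Approximable K g := by
  intro ε hε
  obtain ⟨h, hh, hn⟩ := hg (ε / 2) (half_pos hε)
  obtain ⟨M, α, θ, y, H⟩ := hh (ε / 2) (half_pos hε)
  refine ⟨M, α, θ, y, fun x => ?_⟩
  linarith [norm_sub_le_norm_sub_add_norm_sub (g x) (h x)
    (∑ i, α i * splitSigmoidQ ((∑ k, y i k * x.1 k) + θ i)), H x, hn x]

end

lemma quaternion_norm_le (q : Quaternion ℝ) :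
    ‖q‖ ≤ |q.re| + |q.imI| + |q.imJ| + |q.imK| := by
  have h : ‖q‖ * ‖q‖ = q.re ^ 2 + q.imI ^ 2 + q.imJ ^ 2 + q.imK ^ 2 := by
    rw [← Quaternion.normSq_eq_norm_mul_self, Quaternion.normSq_def']
  rw [← sq_abs q.re, ← sq_abs q.imI, ← sq_abs q.imJ, ← sq_abs q.imK] at h
  have h0 := abs_nonneg q.re
  have h1 := abs_nonneg q.imI
  have h2 := abs_nonneg q.imJ
  have h3 := abs_nonneg q.imK
  refine abs_le_of_sq_le_sq' ?_ (by positivity) |>.2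
  nlinarith [mul_nonneg h0 h1, mul_nonneg h0 h2, mul_nonneg h0 h3, mul_nonneg h1 h2,
    mul_nonneg h1 h3, mul_nonneg h2 h3]

lemma quaternion_abs_le (q : Quaternion ℝ) :
    |q.re| ≤ ‖q‖ ∧ |q.imI| ≤ ‖q‖ ∧ |q.imJ| ≤ ‖q‖ ∧ |q.imK| ≤ ‖q‖ := by
  have h : ‖q‖ * ‖q‖ = q.re ^ 2 + q.imI ^ 2 + q.imJ ^ 2 + q.imK ^ 2 := by
    rw [← Quaternion.normSq_eq_norm_mul_self, Quaternion.normSq_def']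
  refine ⟨?_, ?_, ?_, ?_⟩ <;> apply abs_le_of_sq_le_sq _ (norm_nonneg q) <;>
    nlinarith [sq_nonneg q.re, sq_nonneg q.imI, sq_nonneg q.imJ, sq_nonneg q.imK]

lemma exp_mul_logisticSigmoid_sub (n t : ℝ) :
    Real.exp n * logisticSigmoid (t - n) = Real.exp t / (1 + Real.exp (t - n)) := by
  have h : Real.exp (-(t - n)) = (Real.exp (t - n))⁻¹ := Real.exp_neg _
  have h2 : Real.exp t = Real.exp n * Real.exp (t - n) := by rw [← Real.exp_add]; ring_nf
  have := Real.exp_pos (t - n)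
  rw [logisticSigmoid, h, h2]
  field_simp
  ring

lemma abs_exp_sub_le {B n t : ℝ} (ht : |t| ≤ B) :
    |Real.exp t - Real.exp n * logisticSigmoid (t - n)| ≤ Real.exp (2 * B - n) := by
  have h0 := Real.exp_pos t
  have h1 := Real.exp_pos (t - n)
  rw [exp_mul_logisticSigmoid_sub]
  have h2 : Real.exp t - Real.exp t / (1 + Real.exp (t - n))
      = Real.exp t * Real.exp (t - n) / (1 + Real.exp (t - n)) := by
    field_simp
    ring
  rw [h2, abs_of_nonneg (by positivity)]
  calc _ ≤ Real.exp t * Real.exp (t - n) := div_le_self (by positivity) (by linarith)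
    _ = Real.exp (t + (t - n)) := (Real.exp_add _ _).symm
    _ ≤ _ := Real.exp_le_exp.2 (by linarith [le_abs_self t])

lemma abs_exp_mul_logisticSigmoid_le {B n t : ℝ} (ht : |t| ≤ B) :
    |Real.exp n * logisticSigmoid (t - 2 * n)| ≤ Real.exp (2 * B - n) := by
  have h : Real.exp n * logisticSigmoid (t - 2 * n)
      = Real.exp (t - n) / (1 + Real.exp (t - 2 * n)) := by
    have h3 := exp_mul_logisticSigmoid_sub (2 * n) t
    have h4 : Real.exp (t - n) = Real.exp (-n) * Real.exp t := by
      rw [← Real.exp_add]; ring_nf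
    have h5 : Real.exp n = Real.exp (-n) * Real.exp (2 * n) := by
      rw [← Real.exp_add]; ring_nf
    rw [h4, h5, mul_assoc, h3, mul_div_assoc]
  have h1 := Real.exp_pos (t - 2 * n)
  rw [h, abs_of_nonneg (by positivity)]
  calc _ ≤ Real.exp (t - n) := div_le_self (by positivity) (by linarith)
    _ ≤ _ := Real.exp_le_exp.2 (by linarith [le_abs_self t, abs_nonneg t])

section

variable {N : ℕ} {K : Set (Fin N → Quaternion ℝ)}

/-- One neuron with coefficient `exp n` and bias `-n - 2 n (i + j + k)` converges to the
exponential of the real part of its linear form. -/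
lemma approximable_exp (hK : IsCompact K) (y : Fin N → Quaternion ℝ) :
    Approximable K (fun x => ((Real.exp (∑ k, y k * x.1 k).re : ℝ) : Quaternion ℝ)) := by
  intro ε hε
  obtain ⟨B, hB⟩ := hK.exists_bound_of_continuousOn
    (f := fun x : Fin N → Quaternion ℝ => ∑ k, y k * x k) (by fun_prop)
  -- `n` is chosen so that the four coordinate errors add up to at most `ε / 2`.
  let n : ℝ := 2 * B - Real.log (ε / 8)
  have hn : Real.exp (2 * B - n) = ε / 8 := by
    rw [show 2 * B - n = Real.log (ε / 8) by simp [n], Real.exp_log (by positivity)]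
  obtain ⟨θ, t0, t1, t2, t3⟩ : ∃ θ : Quaternion ℝ,
      θ.re = -n ∧ θ.imI = -(2 * n) ∧ θ.imJ = -(2 * n) ∧ θ.imK = -(2 * n) :=
    ⟨⟨-n, -(2 * n), -(2 * n), -(2 * n)⟩, rfl, rfl, rfl, rfl⟩
  refine ⟨1, fun _ => ((Real.exp n : ℝ) : Quaternion ℝ), fun _ => θ, fun _ => y, fun x => ?_⟩
  have hx := hB x.1 x.2
  simp only [Finset.univ_unique, Finset.sum_singleton]
  generalize (∑ k, y k * x.1 k) = q at hx ⊢
  obtain ⟨h0, h1, h2, h3⟩ := quaternion_abs_le q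
  have e0 := abs_exp_sub_le (n := n) (h0.trans hx)
  have e1 := abs_exp_mul_logisticSigmoid_le (n := n) (h1.trans hx)
  have e2 := abs_exp_mul_logisticSigmoid_le (n := n) (h2.trans hx)
  have e3 := abs_exp_mul_logisticSigmoid_le (n := n) (h3.trans hx)
  refine (quaternion_norm_le _).trans_lt ?_
  have s0 : (splitSigmoidQ (q + θ)).re = logisticSigmoid (q.re - n) := by
    rw [sub_eq_add_neg, ← t0]; rfl
  have s1 : (splitSigmoidQ (q + θ)).imI = logisticSigmoid (q.imI - 2 * n) := by
    rw [sub_eq_add_neg, ← t1]; rfl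
  have s2 : (splitSigmoidQ (q + θ)).imJ = logisticSigmoid (q.imJ - 2 * n) := by
    rw [sub_eq_add_neg, ← t2]; rfl
  have s3 : (splitSigmoidQ (q + θ)).imK = logisticSigmoid (q.imK - 2 * n) := by
    rw [sub_eq_add_neg, ← t3]; rfl
  simp only [Quaternion.coe_mul_eq_smul, Quaternion.re_sub, Quaternion.imI_sub,
    Quaternion.imJ_sub, Quaternion.imK_sub, Quaternion.re_coe, Quaternion.imI_coe,
    Quaternion.imJ_coe, Quaternion.imK_coe, Quaternion.re_smul, Quaternion.imI_smul,
    Quaternion.imJ_smul, Quaternion.imK_smul, s0, s1, s2, s3, smul_eq_mul, zero_sub, abs_neg]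
  linarith

/-- The exponentials `x ↦ exp (Re (∑ k, y k * x k))` as a multiplicative submonoid of
`C(K, ℝ)`. -/
noncomputable def expMonoid (K : Set (Fin N → Quaternion ℝ)) : Submonoid C(K, ℝ) where
  carrier := {g | ∃ y : Fin N → Quaternion ℝ, ∀ x : K, g x = Real.exp (∑ k, y k * x.1 k).re}
  one_mem' := ⟨0, fun x => by simp [Quaternion.re_zero]⟩
  mul_mem' := by
    rintro g h ⟨y, hy⟩ ⟨z, hz⟩
    refine ⟨y + z, fun x => ?_⟩
    simp only [ContinuousMap.mul_apply, hy, hz, Pi.add_apply, add_mul, Finset.sum_add_distrib,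
      Quaternion.re_add, Real.exp_add]

lemma separatesPoints_adjoin_expMonoid :
    (Algebra.adjoin ℝ (expMonoid K : Set C(K, ℝ))).SeparatesPoints := by
  intro x x' hne
  obtain ⟨k, hk⟩ : ∃ k, x.1 k ≠ x'.1 k := by
    by_contra! h
    exact hne (Subtype.ext (funext h))
  -- The functional `Re (star d * ·)` with `d = x k - x' k` takes different values at `x`, `x'`.
  let y : Fin N → Quaternion ℝ := Pi.single k (star (x.1 k - x'.1 k))
  have hy : ∀ z : Fin N → Quaternion ℝ, ∑ l, y l * z l = star (x.1 k - x'.1 k) * z k := by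
    intro z
    rw [Finset.sum_eq_single k] <;> simp +contextual [y]
  let g : C(K, ℝ) := ⟨fun z => Real.exp (∑ l, y l * z.1 l).re,
    Real.continuous_exp.comp (Quaternion.continuous_re.comp (continuous_finsetSum _
      fun l _ => continuous_const.mul ((continuous_apply l).comp continuous_subtype_val)))⟩
  refine ⟨g, ⟨g, Algebra.subset_adjoin ⟨y, fun z => rfl⟩, rfl⟩, fun h => ?_⟩
  have h1 : (star (x.1 k - x'.1 k) * x.1 k).re = (star (x.1 k - x'.1 k) * x'.1 k).re := by
    rw [← hy, ← hy]
    exact Real.exp_injective h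
  have h2 : (star (x.1 k - x'.1 k) * (x.1 k - x'.1 k)).re = 0 := by
    rw [mul_sub, Quaternion.re_sub, h1, sub_self]
  rw [Quaternion.star_mul_self, Quaternion.re_coe, Quaternion.normSq_eq_zero] at h2
  exact hk (sub_eq_zero.1 h2)

lemma approximable_real (hK : IsCompact K) (g : C(K, ℝ)) :
    Approximable K (fun x => ((g x : ℝ) : Quaternion ℝ)) := by
  have : CompactSpace K := isCompact_iff_compactSpace.1 hK
  have hspan : ∀ h ∈ Submodule.span ℝ (expMonoid K : Set C(K, ℝ)),
      Approximable K (fun x => ((h x : ℝ) : Quaternion ℝ)) := by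
    intro h hh
    induction hh using Submodule.span_induction with
    | mem h hh =>
      obtain ⟨y, hy⟩ := hh
      simpa only [hy] using approximable_exp hK y
    | zero => simpa using Approximable.zero
    | add a b _ _ ha hb => simpa using ha.add hb
    | smul c a _ ha => simpa using ha.const_mul (c : Quaternion ℝ)
  refine Approximable.of_near fun ε hε => ?_
  obtain ⟨h, hh⟩ := ContinuousMap.exists_mem_subalgebra_near_continuousMap_of_separatesPoints
    _ separatesPoints_adjoin_expMonoid g ε hε
  refine ⟨fun x => ((h.1 x : ℝ) : Quaternion ℝ), hspan _ ?_, fun x => ?_⟩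
  · have h1 := h.2
    rwa [← Subalgebra.mem_toSubmodule, Algebra.adjoin_eq_span, Submonoid.closure_eq] at h1
  · rw [← Quaternion.coe_sub, Quaternion.norm_coe, norm_sub_rev]
    exact (ContinuousMap.norm_coe_le_norm (h.1 - g) x).trans_lt hh

end

/-- Single-hidden-layer quaternion-valued MLPs with split
sigmoid activation are universal approximators of continuous quaternion-valued
functions on compact subsets of `ℚ^N` (`ℚ = Quaternion ℝ`), with respect to the
quaternion norm. -/
theorem universal_approximation_quaternion {N : ℕ}
    (K : Set (Fin N → Quaternion ℝ)) (hK : IsCompact K)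
    (f : (Fin N → Quaternion ℝ) → Quaternion ℝ) (hf : ContinuousOn f K)
    (ε : ℝ) (hε : 0 < ε) :
    ∃ (M : ℕ) (α θ : Fin M → Quaternion ℝ)
      (y : Fin M → Fin N → Quaternion ℝ),
      ∀ x ∈ K,
        ‖f x - ∑ i : Fin M,
          α i * splitSigmoidQ ((∑ k : Fin N, y i k * x k) + θ i)‖ < ε := by
  have hc : Continuous (fun x : K => f x) := continuousOn_iff_continuous_domRestrict.1 hf
  obtain ⟨qi, i0, i1, i2, i3⟩ : ∃ q : Quaternion ℝ,
      q.re = 0 ∧ q.imI = 1 ∧ q.imJ = 0 ∧ q.imK = 0 := ⟨⟨0, 1, 0, 0⟩, rfl, rfl, rfl, rfl⟩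
  obtain ⟨qj, j0, j1, j2, j3⟩ : ∃ q : Quaternion ℝ,
      q.re = 0 ∧ q.imI = 0 ∧ q.imJ = 1 ∧ q.imK = 0 := ⟨⟨0, 0, 1, 0⟩, rfl, rfl, rfl, rfl⟩
  obtain ⟨qk, k0, k1, k2, k3⟩ : ∃ q : Quaternion ℝ,
      q.re = 0 ∧ q.imI = 0 ∧ q.imJ = 0 ∧ q.imK = 1 := ⟨⟨0, 0, 0, 1⟩, rfl, rfl, rfl, rfl⟩
  have H := (((approximable_real hK ⟨_, Quaternion.continuous_imI.comp hc⟩).const_mul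
      qi).add
    ((approximable_real hK ⟨_, Quaternion.continuous_imJ.comp hc⟩).const_mul
      qj)).add
    (((approximable_real hK ⟨_, Quaternion.continuous_imK.comp hc⟩).const_mul
      qk).add
    (approximable_real hK ⟨_, Quaternion.continuous_re.comp hc⟩))
  have hfe : Approximable K (fun x => f x) := by
    convert H using 2 with x
    ext <;> simp [i0, i1, i2, i3, j0, j1, j2, j3, k0, k1, k2, k3]
  obtain ⟨M, α, θ, y, h⟩ := hfe ε hε
  exact ⟨M, α, θ, y, fun x hx => h ⟨x, hx⟩⟩
end

section
/- Let 𝕌 denote the hyperbolic numbers, realized as ℝ² with the product (a,b)·(c,d) = (ac + bd, ad + bc), and let K ⊆ 𝕌^N be a compact set. For every continuous function f : K → 𝕌 and every ε > 0 there exist M ∈ ℕ, α_1,…,α_M ∈ 𝕌, θ_1,…,θ_M ∈ 𝕌, and y_1,…,y_M ∈ 𝕌^N such that |f(x) − Σ_{i=1}^M α_i σ_𝕌(Σ_{k=1}^N y_{ik} x_k + θ_i)| < ε for all x ∈ K, where σ_𝕌 is the split sigmoid activation, all products are hyperbolic products, and |·| is the Euclidean norm on ℝ²; that is, single-hidden-layer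 hyperbolic-valued MLPs with split sigmoid activation are universal approximators of continuous hyperbolic-valued functions on compact subsets of 𝕌^N. -/
/-!
The closed linear span `T` of the neurons in `C(K, ℝ × ℝ)` is shown to be everything.

* Saturating the second bias (`θ.2 → -∞`) switches off the second component of a neuron, so
  `(σ(ℓ + b), 0)` and `(0, σ(ℓ + b))` lie in `T` for every real linear form `ℓ` on `ℝ^{2N}`
  (`tendsto_neuron`). This reduces the claim to real-valued functions.
* For the logistic sigmoid, `e^c σ(t - c) = 1 / (e^{-c} + e^{-t}) → e^t` as `c → ∞`, uniformly for
  bounded `t`. So a closed subspace of `C(K, ℝ)` containing all `σ(ℓ + b)` contains all `e^ℓ`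
  (`tendsto_exp`).
* The functions `e^ℓ` form a monoid separating points, hence their span is a subalgebra that is
  dense by the Stone–Weierstrass theorem (`eq_top_of_sigmoid_mem`).
-/

/-- The hyperbolic-number product on `ℝ²`: `(a,b)·(c,d) = (ac + bd, ad + bc)`. -/
def hyperbolicMul (x y : ℝ × ℝ) : ℝ × ℝ :=
  (x.1 * y.1 + x.2 * y.2, x.1 * y.2 + x.2 * y.1)

/-- The split sigmoid activation `σ_𝕌` on the hyperbolic numbers. -/
noncomputable def splitSigmoidU (x : ℝ × ℝ) : ℝ × ℝ :=
  (logisticSigmoid x.1, logisticSigmoid x.2)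

/-- The Euclidean norm on the hyperbolic numbers `𝕌 ≅ ℝ²`. -/
noncomputable def hyperbolicAbs (x : ℝ × ℝ) : ℝ := Real.sqrt (x.1 ^ 2 + x.2 ^ 2)

open Filter Topology

namespace HypApprox

lemma continuous_hyperbolicMul_right (w : ℝ × ℝ) : Continuous (hyperbolicMul w) := by
  unfold hyperbolicMul; fun_prop

lemma continuous_logisticSigmoid : Continuous logisticSigmoid := by
  unfold logisticSigmoid
  exact continuous_const.div (by fun_prop) fun t => by positivity

variable {N : ℕ}

/-- The bias-free hyperbolic pre-activation `∑ₖ wₖ xₖ`. Its first component is the general real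
linear form on `ℝ^{2N}`. -/
def pre (w x : Fin N → ℝ × ℝ) : ℝ × ℝ := ∑ k, hyperbolicMul (w k) (x k)

lemma continuous_pre (w : Fin N → ℝ × ℝ) : Continuous (pre w) := by
  unfold pre
  exact continuous_finsetSum _ fun k _ =>
    (continuous_hyperbolicMul_right (w k)).comp (continuous_apply k)

lemma pre_add (v w x : Fin N → ℝ × ℝ) : pre (v + w) x = pre v x + pre w x := by
  unfold pre
  rw [← Finset.sum_add_distrib]
  refine Finset.sum_congr rfl fun k _ => ?_
  ext <;> simp [hyperbolicMul] <;> ring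

lemma pre_zero (x : Fin N → ℝ × ℝ) : pre 0 x = 0 := by
  simp [pre, hyperbolicMul]

lemma pre_single (k : Fin N) (c : ℝ × ℝ) (x : Fin N → ℝ × ℝ) :
    pre (Pi.single k c) x = hyperbolicMul c (x k) := by
  unfold pre
  rw [Finset.sum_eq_single k]
  · simp
  · intro j _ hj
    simp [hj, hyperbolicMul]
  · simp

variable {K : Set (Fin N → ℝ × ℝ)}

/-- The exponential ridge function `x ↦ exp (pre w x).1` on `K`. -/
noncomputable def expMap (K : Set (Fin N → ℝ × ℝ)) (w : Fin N → ℝ × ℝ) : C(K, ℝ) where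
  toFun x := Real.exp (pre w x).1
  continuous_toFun := Real.continuous_exp.comp
    (continuous_fst.comp ((continuous_pre w).comp continuous_subtype_val))

/-- The second-component analogue of `expMap`. -/
noncomputable def expMap₂ (K : Set (Fin N → ℝ × ℝ)) (w : Fin N → ℝ × ℝ) : C(K, ℝ) where
  toFun x := Real.exp (pre w x).2
  continuous_toFun := Real.continuous_exp.comp
    (continuous_snd.comp ((continuous_pre w).comp continuous_subtype_val))

/-- The real sigmoidal ridge function `x ↦ σ ((pre w x).1 + b)` on `K`. -/
noncomputable def sigMap (K : Set (Fin N → ℝ × ℝ)) (w : Fin N → ℝ × ℝ) (b : ℝ) : C(K, ℝ) where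
  toFun x := logisticSigmoid ((pre w x).1 + b)
  continuous_toFun := continuous_logisticSigmoid.comp
    ((continuous_fst.comp ((continuous_pre w).comp continuous_subtype_val)).add continuous_const)

/-- The hyperbolic neuron `x ↦ α · σ_𝕌 (pre w x + θ)` on `K`. -/
noncomputable def neuron (K : Set (Fin N → ℝ × ℝ)) (p : (ℝ × ℝ) × (ℝ × ℝ) × (Fin N → ℝ × ℝ)) :
    C(K, ℝ × ℝ) where
  toFun x := hyperbolicMul p.1 (splitSigmoidU (pre p.2.2 x + p.2.1))
  continuous_toFun := by
    have h : Continuous splitSigmoidU :=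
      (continuous_logisticSigmoid.comp continuous_fst).prodMk
        (continuous_logisticSigmoid.comp continuous_snd)
    exact (continuous_hyperbolicMul_right _).comp (h.comp
      (((continuous_pre p.2.2).comp continuous_subtype_val).add continuous_const))

lemma logisticSigmoid_nonneg (t : ℝ) : 0 ≤ logisticSigmoid t := by
  unfold logisticSigmoid; positivity

lemma logisticSigmoid_le_exp (t : ℝ) : logisticSigmoid t ≤ Real.exp t := by
  unfold logisticSigmoid
  rw [div_le_iff₀ (by positivity), mul_add, ← Real.exp_add]
  simp [Real.exp_nonneg]

lemma abs_exp_mul_sigmoid_sub (t c : ℝ) :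
    |Real.exp c * logisticSigmoid (t + -c) - Real.exp t| ≤ Real.exp t ^ 2 * Real.exp (-c) := by
  unfold logisticSigmoid
  have hc := Real.exp_pos c
  have ht := Real.exp_pos t
  have h : Real.exp (-(t + -c)) = Real.exp c / Real.exp t := by
    rw [← Real.exp_sub]; ring_nf
  have e : Real.exp c * (1 / (1 + Real.exp c / Real.exp t)) - Real.exp t
      = -(Real.exp t ^ 2 / (Real.exp t + Real.exp c)) := by
    field_simp; ring
  rw [h, e, abs_neg, abs_of_nonneg (by positivity), Real.exp_neg, ← div_eq_mul_inv]
  gcongr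
  linarith

lemma tendsto_const_mul_exp_neg (C : ℝ) :
    Tendsto (fun n : ℕ => C * Real.exp (-(n : ℝ))) atTop (𝓝 0) := by
  simpa using (Real.tendsto_exp_neg_atTop_nhds_zero.comp
    (tendsto_natCast_atTop_atTop (R := ℝ))).const_mul C

lemma tendsto_exp [CompactSpace K] (w : Fin N → ℝ × ℝ) :
    Tendsto (fun n : ℕ => Real.exp n • sigMap K w (-n)) atTop (𝓝 (expMap K w)) := by
  rw [tendsto_iff_norm_sub_tendsto_zero]
  refine squeeze_zero (fun _ => norm_nonneg _) (fun n => ?_)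
    (tendsto_const_mul_exp_neg (‖expMap K w‖ ^ 2))
  rw [ContinuousMap.norm_le _ (by positivity)]
  intro x
  refine (abs_exp_mul_sigmoid_sub (pre w x).1 n).trans ?_
  gcongr
  exact (le_abs_self _).trans ((expMap K w).norm_coe_le_norm x)

/-- A closed subspace of `C(K, ℝ)` containing all sigmoidal ridge functions is everything: the
real universal approximation theorem. -/
lemma eq_top_of_sigmoid_mem [CompactSpace K] (V : Submodule ℝ C(K, ℝ))
    (hV : IsClosed (V : Set C(K, ℝ))) (h : ∀ w b, sigMap K w b ∈ V) : V = ⊤ := by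
  have hexp : ∀ w, expMap K w ∈ V := fun w =>
    hV.mem_of_tendsto (tendsto_exp w)
      (Eventually.of_forall fun n => V.smul_mem _ (h w _))
  let S : Submonoid C(K, ℝ) :=
    { carrier := Set.range (expMap K)
      one_mem' := ⟨0, by ext x; simp [expMap, pre_zero]⟩
      mul_mem' := by
        rintro _ _ ⟨v, rfl⟩ ⟨w, rfl⟩
        exact ⟨v + w, by ext x; simp [expMap, pre_add, Real.exp_add]⟩ }
  have hA : Subalgebra.toSubmodule (Algebra.adjoin ℝ (S : Set C(K, ℝ))) ≤ V := by
    rw [Algebra.adjoin_eq_span, Submonoid.closure_eq, Submodule.span_le]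
    rintro _ ⟨w, rfl⟩
    exact hexp w
  have hsep : (Algebra.adjoin ℝ (S : Set C(K, ℝ))).SeparatesPoints := by
    intro x y hxy
    by_contra hne
    have key : ∀ w, (pre w (x : Fin N → ℝ × ℝ)).1 = (pre w (y : Fin N → ℝ × ℝ)).1 := by
      intro w
      by_contra hw
      exact hne ⟨expMap K w, ⟨expMap K w, Algebra.subset_adjoin ⟨w, rfl⟩, rfl⟩,
        fun e => hw (Real.exp_injective e)⟩
    apply hxy
    ext k
    · simpa [pre_single, hyperbolicMul] using key (Pi.single k (1, 0))
    · simpa [pre_single, hyperbolicMul] using key (Pi.single k (0, 1))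
  have hdense := ContinuousMap.subalgebra_topologicalClosure_eq_top_of_separatesPoints _ hsep
  rw [eq_top_iff]
  intro g _
  have hg : g ∈ (Algebra.adjoin ℝ (S : Set C(K, ℝ))).topologicalClosure := by
    rw [hdense]; trivial
  exact closure_minimal (t := (V : Set C(K, ℝ))) hA hV hg

/-- The inclusion of `C(K, ℝ)` into `C(K, ℝ × ℝ)` induced by a linear map `ℝ → ℝ × ℝ`. -/
noncomputable abbrev embed (K : Set (Fin N → ℝ × ℝ)) (L : ℝ →L[ℝ] ℝ × ℝ) :
    C(K, ℝ) →L[ℝ] C(K, ℝ × ℝ) :=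
  L.compLeftContinuous ℝ K

/-- The two choices `α = (1, 0)` and `α = (0, 1)` place the surviving sigmoid in the first and the
second component respectively. -/
lemma tendsto_neuron [CompactSpace K] (w : Fin N → ℝ × ℝ) (b : ℝ) :
    Tendsto (fun n : ℕ => neuron K ((1, 0), (b, -n), w)) atTop
      (𝓝 (embed K (ContinuousLinearMap.inl ℝ ℝ ℝ) (sigMap K w b))) ∧
    Tendsto (fun n : ℕ => neuron K ((0, 1), (b, -n), w)) atTop
      (𝓝 (embed K (ContinuousLinearMap.inr ℝ ℝ ℝ) (sigMap K w b))) := by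
  have bound : ∀ (n : ℕ) (x : K), |logisticSigmoid ((pre w x).2 + -(n : ℝ))|
      ≤ ‖expMap₂ K w‖ * Real.exp (-(n : ℝ)) := by
    intro n x
    rw [abs_of_nonneg (logisticSigmoid_nonneg _)]
    refine (logisticSigmoid_le_exp _).trans ?_
    rw [Real.exp_add]
    gcongr
    exact (le_abs_self _).trans ((expMap₂ K w).norm_coe_le_norm x)
  constructor
  all_goals
    rw [tendsto_iff_norm_sub_tendsto_zero]
    refine squeeze_zero (fun _ => norm_nonneg _) (fun n => ?_)
      (tendsto_const_mul_exp_neg ‖expMap₂ K w‖)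
    rw [ContinuousMap.norm_le _ (by positivity)]
    intro x
    refine le_trans (le_of_eq ?_) (bound n x)
    simp [neuron, sigMap, hyperbolicMul, splitSigmoidU, Prod.norm_def]

/-- The neurons span a dense subspace of `C(K, ℝ × ℝ)`. -/
lemma closure_span_neuron [CompactSpace K] :
    (Submodule.span ℝ (Set.range (neuron K))).topologicalClosure = ⊤ := by
  set T := (Submodule.span ℝ (Set.range (neuron K))).topologicalClosure with hT
  have hTc : IsClosed (T : Set C(K, ℝ × ℝ)) := Submodule.isClosed_topologicalClosure _
  have hn : ∀ p, neuron K p ∈ T := fun p =>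
    Submodule.le_topologicalClosure _ (Submodule.subset_span ⟨p, rfl⟩)
  have aux : ∀ L : ℝ →L[ℝ] ℝ × ℝ, (∀ w b, embed K L (sigMap K w b) ∈ T) →
      ∀ g, embed K L g ∈ T := by
    intro L hL g
    have htop := eq_top_of_sigmoid_mem (T.comap (embed K L).toLinearMap)
      (hTc.preimage (embed K L).continuous) hL
    have hg : g ∈ T.comap (embed K L).toLinearMap := by rw [htop]; trivial
    exact hg
  have h1 := aux (ContinuousLinearMap.inl ℝ ℝ ℝ) fun w b =>
    hTc.mem_of_tendsto (tendsto_neuron w b).1 (Eventually.of_forall fun n => hn _)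
  have h2 := aux (ContinuousLinearMap.inr ℝ ℝ ℝ) fun w b =>
    hTc.mem_of_tendsto (tendsto_neuron w b).2 (Eventually.of_forall fun n => hn _)
  rw [eq_top_iff]
  intro g _
  have hg : g = embed K (ContinuousLinearMap.inl ℝ ℝ ℝ) ⟨fun x => (g x).1, by fun_prop⟩
      + embed K (ContinuousLinearMap.inr ℝ ℝ ℝ) ⟨fun x => (g x).2, by fun_prop⟩ := by
    ext x <;> simp
  rw [hg]
  exact T.add_mem (h1 _) (h2 _)

lemma hyperbolicAbs_le (z : ℝ × ℝ) : hyperbolicAbs z ≤ 2 * ‖z‖ := by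
  unfold hyperbolicAbs
  have h1 : |z.1| ≤ ‖z‖ := norm_fst_le z
  have h2 : |z.2| ≤ ‖z‖ := norm_snd_le z
  apply Real.sqrt_le_iff.2 ⟨by positivity, ?_⟩
  nlinarith [sq_le_sq.2 (h1.trans (le_abs_self _)), sq_le_sq.2 (h2.trans (le_abs_self _)),
    sq_nonneg ‖z‖]

end HypApprox

open HypApprox

/-- Single-hidden-layer hyperbolic-valued MLPs with split
sigmoid activation are universal approximators of continuous hyperbolic-valued
functions on compact subsets of `𝕌^N`, with respect to the Euclidean norm on
`𝕌 ≅ ℝ²`. -/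
theorem universal_approximation_hyperbolic {N : ℕ} (K : Set (Fin N → ℝ × ℝ))
    (hK : IsCompact K) (f : (Fin N → ℝ × ℝ) → ℝ × ℝ) (hf : ContinuousOn f K)
    (ε : ℝ) (hε : 0 < ε) :
    ∃ (M : ℕ) (α θ : Fin M → ℝ × ℝ) (y : Fin M → Fin N → ℝ × ℝ),
      ∀ x ∈ K,
        hyperbolicAbs (f x - ∑ i : Fin M,
          hyperbolicMul (α i)
            (splitSigmoidU ((∑ k : Fin N, hyperbolicMul (y i k) (x k)) + θ i)))
          < ε := by
  have : CompactSpace K := isCompact_iff_compactSpace.1 hK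
  let F : C(K, ℝ × ℝ) := ⟨K.domRestrict f, hf.domRestrict⟩
  have hF : F ∈ (Submodule.span ℝ (Set.range (neuron K))).topologicalClosure := by
    rw [closure_span_neuron]; trivial
  obtain ⟨g, hg, hFg⟩ := Metric.mem_closure_iff.1 hF (ε / 2) (by positivity)
  obtain ⟨M, c, v, rfl⟩ := Submodule.mem_span_set'.1 hg
  choose p hp using fun i => (v i).2
  refine ⟨M, fun i => c i • (p i).1, fun i => (p i).2.1, fun i => (p i).2.2, fun x hx => ?_⟩
  refine (hyperbolicAbs_le _).trans_lt ?_
  have h := (ContinuousMap.dist_apply_le_dist (⟨x, hx⟩ : K)).trans_lt hFg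
  rw [dist_eq_norm] at h
  have e : (∑ i, c i • (v i : C(K, ℝ × ℝ))) ⟨x, hx⟩ = ∑ i : Fin M,
      hyperbolicMul (c i • (p i).1)
        (splitSigmoidU ((∑ k : Fin N, hyperbolicMul ((p i).2.2 k) (x k)) + (p i).2.1)) := by
    rw [ContinuousMap.sum_apply]
    refine Finset.sum_congr rfl fun i _ => ?_
    rw [← hp i]
    ext <;> simp [neuron, pre, hyperbolicMul] <;> ring
  rw [e] at h
  change ‖f x - _‖ < _ at h
  linarith
end
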